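/- arXiv:2202.05989 — 2 statements merged into one kernel-verified Lean document; each statement's English description precedes it below -/
import Mathlib

section
/- Let t ≥ 1 be an integer, and suppose each rectangle in a guillotine-separable packing inside a box B has height an integer multiple of H/t where H is the height of B, and there are at most 1/δ rectangles stacked vertically (at most 1/δ stages of horizontal cuts). Then the total number of guillotine cuts applied over all stages is at most ((1/δ)·2^t)^{1/δ}, so the packing can be partitioned into at most O_δ,t(1) boxes in which items are stacked side by side or on top of one another. -/
/-!
The bound comes from forgetting positions and merging pieces of equal configuration.

Let `u = (B.t - B.b) / t` be the height unit.  A guillotine-separable packing is turned into a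
position-free recursive scheme `Guil`, in which a piece of width `W` has an integral height `p`
(the number of whole units it contains).  Items have height at least one unit, so a horizontal cut
with items on both sides splits `p` into two positive parts.  Widths and item multisets add up
under vertical cuts, hence all pieces produced by the first vertical stage whose first horizontal
cut is at the same height `a` can be merged into a single piece cut at `a`, and the uncut pieces
form a single row of items (`Guil.decomp`).  If `g p` boxes suffice at height `p`, this yields
`g p ≤ 1 + ∑_{0 < a < p} (g a + g (p - a))`, so `g p = 3 ^ p` works (`Guil.good`); at height `t`
there are at most `3 ^ t` boxes, each of which is a row.

If `1 / δ < 2`, no vertical line meets two items, so the packing is already one row and the box `B`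
suffices.  If `1 / δ ≥ 2`, then `3 ^ t ≤ (2 * 2 ^ t) ^ 2 ≤ (1 / δ * 2 ^ t) ^ (1 / δ)`.
-/

/-- An axis-aligned box / rectangle given by its left, right, bottom and top coordinates. -/
structure Box where
  l : ℝ
  r : ℝ
  b : ℝ
  t : ℝ

/-- `A` lies inside `B`. -/
def Box.Inside (A B : Box) : Prop :=
  B.l ≤ A.l ∧ A.r ≤ B.r ∧ B.b ≤ A.b ∧ A.t ≤ B.t

/-- The open interiors of `A` and `B` are disjoint (non-overlapping placement). -/
def Box.NonOverlap (A B : Box) : Prop :=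
  A.r ≤ B.l ∨ B.r ≤ A.l ∨ A.t ≤ B.b ∨ B.t ≤ A.b

/-- Guillotine separability of a family of placed rectangles inside a box: the
rectangles indexed by `S` can be separated by a recursive sequence of axis-parallel
end-to-end (guillotine) cuts, none of which intersects the interior of a rectangle. -/
inductive GSep {ι : Type} [DecidableEq ι] (rect : ι → Box) : Finset ι → Box → Prop
  | empty (B : Box) : GSep rect ∅ B
  | single (i : ι) (B : Box) : (rect i).Inside B → GSep rect {i} B
  | vcut (S S₁ S₂ : Finset ι) (B : Box) (x : ℝ) :
      B.l ≤ x → x ≤ B.r →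
      S₁ ∪ S₂ = S → Disjoint S₁ S₂ →
      (∀ i ∈ S₁, (rect i).r ≤ x) → (∀ i ∈ S₂, x ≤ (rect i).l) →
      GSep rect S₁ ⟨B.l, x, B.b, B.t⟩ →
      GSep rect S₂ ⟨x, B.r, B.b, B.t⟩ →
      GSep rect S B
  | hcut (S S₁ S₂ : Finset ι) (B : Box) (y : ℝ) :
      B.b ≤ y → y ≤ B.t →
      S₁ ∪ S₂ = S → Disjoint S₁ S₂ →
      (∀ i ∈ S₁, (rect i).t ≤ y) → (∀ i ∈ S₂, y ≤ (rect i).b) →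
      GSep rect S₁ ⟨B.l, B.r, B.b, y⟩ →
      GSep rect S₂ ⟨B.l, B.r, y, B.t⟩ →
      GSep rect S B

/-- The rectangle of item `i` placed at position `(x i, y i)` with width `w i` and
height `h i`. -/
def rectOf {n : ℕ} (x y w h : Fin n → ℝ) (i : Fin n) : Box :=
  ⟨x i, x i + w i, y i, y i + h i⟩

/-! ### Guillotine-separable families -/

/-- Guillotine separability only depends on the rectangles, not on how they are indexed. -/
lemma GSep.map {ι κ : Type} [DecidableEq ι] [DecidableEq κ] {r : ι → Box} {r' : κ → Box}
    (e : ι ↪ κ) (he : ∀ i, r' (e i) = r i) {S : Finset ι} {B : Box} (hS : GSep r S B) :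
    GSep r' (S.map e) B := by
  induction hS with
  | empty B => simpa using GSep.empty B
  | single i B h =>
    rw [Finset.map_singleton]
    exact GSep.single _ _ (by rw [he]; exact h)
  | vcut S S₁ S₂ B x h1 h2 hu hd hl hr _ _ ih1 ih2 =>
    refine GSep.vcut _ (S₁.map e) (S₂.map e) B x h1 h2 ?_ ?_ ?_ ?_ ih1 ih2
    · rw [← Finset.map_union, hu]
    · exact (Finset.disjoint_map e).2 hd
    · intro i hi
      obtain ⟨j, hj, rfl⟩ := Finset.mem_map.1 hi
      rw [he]; exact hl j hj
    · intro i hi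
      obtain ⟨j, hj, rfl⟩ := Finset.mem_map.1 hi
      rw [he]; exact hr j hj
  | hcut S S₁ S₂ B y h1 h2 hu hd hl hr _ _ ih1 ih2 =>
    refine GSep.hcut _ (S₁.map e) (S₂.map e) B y h1 h2 ?_ ?_ ?_ ?_ ih1 ih2
    · rw [← Finset.map_union, hu]
    · exact (Finset.disjoint_map e).2 hd
    · intro i hi
      obtain ⟨j, hj, rfl⟩ := Finset.mem_map.1 hi
      rw [he]; exact hl j hj
    · intro i hi
      obtain ⟨j, hj, rfl⟩ := Finset.mem_map.1 hi
      rw [he]; exact hr j hj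

lemma GSep.inside {ι : Type} [DecidableEq ι] {r : ι → Box} {S : Finset ι} {B : Box}
    (hS : GSep r S B) : ∀ i ∈ S, (r i).Inside B := by
  induction hS with
  | empty B => simp
  | single i B h => simpa using h
  | vcut S S₁ S₂ B x h1 h2 hu hd hl hr _ _ ih1 ih2 =>
    subst hu
    intro i hi
    rcases Finset.mem_union.1 hi with hi | hi
    · obtain ⟨a, b, c, d⟩ := ih1 i hi
      exact ⟨a, le_trans b h2, c, d⟩
    · obtain ⟨a, b, c, d⟩ := ih2 i hi
      exact ⟨le_trans h1 a, b, c, d⟩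
  | hcut S S₁ S₂ B y h1 h2 hu hd hl hr _ _ ih1 ih2 =>
    subst hu
    intro i hi
    rcases Finset.mem_union.1 hi with hi | hi
    · obtain ⟨a, b, c, d⟩ := ih1 i hi
      exact ⟨a, b, c, le_trans d h2⟩
    · obtain ⟨a, b, c, d⟩ := ih2 i hi
      exact ⟨a, b, le_trans h1 c, d⟩

lemma GSep.nonOverlap {ι : Type} [DecidableEq ι] {r : ι → Box} {S : Finset ι} {B : Box}
    (hS : GSep r S B) : ∀ i ∈ S, ∀ j ∈ S, i ≠ j → (r i).NonOverlap (r j) := by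
  induction hS with
  | empty B => simp
  | single i B h => simp
  | vcut S S₁ S₂ B x h1 h2 hu hd hl hr _ _ ih1 ih2 =>
    subst hu
    intro i hi j hj hij
    rcases Finset.mem_union.1 hi with hi | hi <;> rcases Finset.mem_union.1 hj with hj | hj
    · exact ih1 i hi j hj hij
    · exact Or.inl ((hl i hi).trans (hr j hj))
    · exact Or.inr (Or.inl ((hl j hj).trans (hr i hi)))
    · exact ih2 i hi j hj hij
  | hcut S S₁ S₂ B y h1 h2 hu hd hl hr _ _ ih1 ih2 =>
    subst hu
    intro i hi j hj hij
    rcases Finset.mem_union.1 hi with hi | hi <;> rcases Finset.mem_union.1 hj with hj | hj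
    · exact ih1 i hi j hj hij
    · exact Or.inr (Or.inr (Or.inl ((hl i hi).trans (hr j hj))))
    · exact Or.inr (Or.inr (Or.inr ((hl j hj).trans (hr i hi))))
    · exact ih2 i hi j hj hij

/-- Two guillotine-separable families on the two sides of a vertical line form one. -/
lemma GSep.vsum {β γ : Type} [Fintype β] [Fintype γ] [DecidableEq β] [DecidableEq γ]
    {r : β → Box} {s : γ → Box} {B : Box} {x : ℝ} (h1 : B.l ≤ x) (h2 : x ≤ B.r)
    (hr : GSep r Finset.univ ⟨B.l, x, B.b, B.t⟩) (hs : GSep s Finset.univ ⟨x, B.r, B.b, B.t⟩) :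
    GSep (Sum.elim r s) Finset.univ B := by
  refine GSep.vcut _ (Finset.univ.map .inl) (Finset.univ.map .inr) B x h1 h2 ?_ ?_ ?_ ?_
    (hr.map _ fun _ => rfl) (hs.map _ fun _ => rfl)
  · ext (i | i) <;> simp
  · rw [Finset.disjoint_left]; rintro (i | i) <;> simp
  · intro i hi
    obtain ⟨j, -, rfl⟩ := Finset.mem_map.1 hi
    exact (hr.inside j (Finset.mem_univ _)).2.1
  · intro i hi
    obtain ⟨j, -, rfl⟩ := Finset.mem_map.1 hi
    exact (hs.inside j (Finset.mem_univ _)).1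

/-- Two guillotine-separable families on the two sides of a horizontal line form one. -/
lemma GSep.hsum {β γ : Type} [Fintype β] [Fintype γ] [DecidableEq β] [DecidableEq γ]
    {r : β → Box} {s : γ → Box} {B : Box} {y : ℝ} (h1 : B.b ≤ y) (h2 : y ≤ B.t)
    (hr : GSep r Finset.univ ⟨B.l, B.r, B.b, y⟩) (hs : GSep s Finset.univ ⟨B.l, B.r, y, B.t⟩) :
    GSep (Sum.elim r s) Finset.univ B := by
  refine GSep.hcut _ (Finset.univ.map .inl) (Finset.univ.map .inr) B y h1 h2 ?_ ?_ ?_ ?_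
    (hr.map _ fun _ => rfl) (hs.map _ fun _ => rfl)
  · ext (i | i) <;> simp
  · rw [Finset.disjoint_left]; rintro (i | i) <;> simp
  · intro i hi
    obtain ⟨j, -, rfl⟩ := Finset.mem_map.1 hi
    exact (hr.inside j (Finset.mem_univ _)).2.2.2
  · intro i hi
    obtain ⟨j, -, rfl⟩ := Finset.mem_map.1 hi
    exact (hs.inside j (Finset.mem_univ _)).2.2.1

/-! ### Position-free guillotine schemes -/

/-- `Guil w k S W p`: items with widths `w` and integral heights `k`, taken from the multiset `S`,
can be cut out of a `W × p` piece by guillotine cuts.  Positions are forgotten and cuts may waste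
space; items are collected in a multiset so that merging pieces is addition. -/
inductive Guil {ι : Type} (w : ι → ℝ) (k : ι → ℕ) : Multiset ι → ℝ → ℕ → Prop
  | empty (W : ℝ) (p : ℕ) : 0 ≤ W → Guil w k 0 W p
  | single (i : ι) (W : ℝ) (p : ℕ) : 0 ≤ W → w i ≤ W → k i ≤ p → Guil w k {i} W p
  | v (S₁ S₂ : Multiset ι) (W₁ W₂ W : ℝ) (p : ℕ) : W₁ + W₂ ≤ W →
      Guil w k S₁ W₁ p → Guil w k S₂ W₂ p → Guil w k (S₁ + S₂) W p
  | h (S₁ S₂ : Multiset ι) (W : ℝ) (p₁ p₂ p : ℕ) : p₁ + p₂ ≤ p →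
      Guil w k S₁ W p₁ → Guil w k S₂ W p₂ → Guil w k (S₁ + S₂) W p

lemma Guil.nonneg {ι : Type} {w : ι → ℝ} {k : ι → ℕ} {S : Multiset ι} {W : ℝ} {p : ℕ}
    (hG : Guil w k S W p) : 0 ≤ W := by
  induction hG with
  | empty W p h => exact h
  | single i W p h _ _ => exact h
  | v S₁ S₂ W₁ W₂ W p h _ _ ih1 ih2 => linarith
  | h S₁ S₂ W p₁ p₂ p h _ _ ih1 ih2 => exact ih1

lemma Guil.mono {ι : Type} {w : ι → ℝ} {k : ι → ℕ} {S : Multiset ι} {W : ℝ} {p : ℕ}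
    (hG : Guil w k S W p) : ∀ q, p ≤ q → Guil w k S W q := by
  induction hG with
  | empty W p h => exact fun q _ => .empty W q h
  | single i W p h h1 h2 => exact fun q hq => .single i W q h h1 (h2.trans hq)
  | v S₁ S₂ W₁ W₂ W p h _ _ ih1 ih2 => exact fun q hq => .v _ _ _ _ _ _ h (ih1 q hq) (ih2 q hq)
  | h S₁ S₂ W p₁ p₂ p h g1 g2 ih1 ih2 => exact fun q hq => .h _ _ _ _ _ _ (h.trans hq) g1 g2

lemma Guil.eq_zero {ι : Type} {w : ι → ℝ} {k : ι → ℕ} (hk : ∀ i, 1 ≤ k i) {S : Multiset ι}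
    {W : ℝ} {p : ℕ} (hG : Guil w k S W p) : p = 0 → S = 0 := by
  induction hG with
  | empty W p h => exact fun _ => rfl
  | single i W p h h1 h2 => intro hp; have := hk i; omega
  | v S₁ S₂ W₁ W₂ W p h _ _ ih1 ih2 => intro hp; rw [ih1 hp, ih2 hp, add_zero]
  | h S₁ S₂ W p₁ p₂ p h g1 g2 ih1 ih2 =>
    intro hp; rw [ih1 (by omega), ih2 (by omega), add_zero]

/-- Merging after the first vertical stage: the pieces that are not cut further form one row `R`
of total width `W₀`, and for each `0 < a < q` the pieces cut horizontally at height `a` are merged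
into one piece of width `V a`, with the items `A a` below and `C a` above the cut. -/
lemma Guil.decomp {ι : Type} {w : ι → ℝ} {k : ι → ℕ} (hk : ∀ i, 1 ≤ k i) {S : Multiset ι}
    {W : ℝ} {p : ℕ} (hG : Guil w k S W p) : ∀ q, p ≤ q →
    ∃ (R : Multiset ι) (A C : ℕ → Multiset ι) (W₀ : ℝ) (V : ℕ → ℝ),
      S = R + ∑ a ∈ Finset.Ico 1 q, (A a + C a) ∧
      W₀ + ∑ a ∈ Finset.Ico 1 q, V a ≤ W ∧ 0 ≤ W₀ ∧
      (R.map w).sum ≤ W₀ ∧ (∀ i ∈ R, k i ≤ q) ∧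
      ∀ a ∈ Finset.Ico 1 q, Guil w k (A a) (V a) a ∧ Guil w k (C a) (V a) (q - a) := by
  induction hG with
  | empty W p h =>
    intro q hq
    exact ⟨0, 0, 0, 0, 0, by simp, by simpa using h, le_rfl, by simp, by simp,
      fun a _ => ⟨.empty _ _ le_rfl, .empty _ _ le_rfl⟩⟩
  | single i W p h h1 h2 =>
    intro q hq
    exact ⟨{i}, 0, 0, W, 0, by simp, by simp, h, by simpa using h1,
      by simpa using h2.trans hq,
      fun a _ => ⟨.empty _ _ le_rfl, .empty _ _ le_rfl⟩⟩
  | v S₁ S₂ W₁ W₂ W p h _ _ ih1 ih2 =>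
    intro q hq
    obtain ⟨R, A, C, W₀, V, e, e1, e2, e3, e4, e5⟩ := ih1 q hq
    obtain ⟨R', A', C', W₀', V', f, f1, f2, f3, f4, f5⟩ := ih2 q hq
    refine ⟨R + R', A + A', C + C', W₀ + W₀', V + V', ?_, ?_, by linarith, ?_, ?_, ?_⟩
    · simp only [Pi.add_apply, Finset.sum_add_distrib] at e f ⊢
      rw [e, f]; abel
    · simp only [Pi.add_apply, Finset.sum_add_distrib]
      linarith
    · rw [Multiset.map_add, Multiset.sum_add]; linarith
    · intro i hi
      rcases Multiset.mem_add.1 hi with hi | hi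
      · exact e4 i hi
      · exact f4 i hi
    · intro a ha
      exact ⟨.v _ _ _ _ _ _ le_rfl (e5 a ha).1 (f5 a ha).1,
        .v _ _ _ _ _ _ le_rfl (e5 a ha).2 (f5 a ha).2⟩
  | h S₁ S₂ W p₁ p₂ p h g1 g2 ih1 ih2 =>
    intro q hq
    -- A side of integral height `0` contains no items, so such a cut can be ignored.
    rcases Nat.eq_zero_or_pos p₁ with h0 | h0
    · rw [g1.eq_zero hk h0, zero_add]; exact ih2 q (by omega)
    rcases Nat.eq_zero_or_pos p₂ with h0' | h0'
    · rw [g2.eq_zero hk h0', add_zero]; exact ih1 q (by omega)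
    have hm : p₁ ∈ Finset.Ico 1 q := by rw [Finset.mem_Ico]; omega
    refine ⟨0, Pi.single p₁ S₁, Pi.single p₁ S₂, 0, Pi.single p₁ W, ?_, ?_, le_rfl, by simp,
      by simp, ?_⟩
    · rw [Finset.sum_add_distrib, Finset.sum_pi_single', Finset.sum_pi_single']
      simp only [hm, if_true, zero_add]
    · rw [Finset.sum_pi_single']
      simp only [hm, if_true, zero_add, le_refl]
    · intro a _
      rcases eq_or_ne a p₁ with rfl | hne
      · simp only [Pi.single_eq_same]
        exact ⟨g1, g2.mono _ (by omega)⟩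
      · simp only [Pi.single_eq_of_ne hne]
        exact ⟨.empty _ _ le_rfl, .empty _ _ le_rfl⟩

/-- A guillotine-separable packing gives a position-free scheme, the height of a piece being
rounded down to whole units. -/
lemma GSep.guil {n : ℕ} {x y w h : Fin n → ℝ} {k : Fin n → ℕ} {u : ℝ} (hu : 0 < u)
    (hk : ∀ i, h i = k i * u) {S : Finset (Fin n)} {B : Box}
    (hS : GSep (rectOf x y w h) S B) : B.l ≤ B.r → B.b ≤ B.t →
    Guil w k S.val (B.r - B.l) ⌊(B.t - B.b) / u⌋₊ := by
  induction hS with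
  | empty B => exact fun hl _ => .empty _ _ (by linarith)
  | single i B hi =>
    intro hl hb
    obtain ⟨a, b, c, d⟩ := hi
    simp only [rectOf] at a b c d
    have := hk i
    refine .single i _ _ (by linarith) (by linarith) (Nat.le_floor ?_)
    rw [le_div_iff₀ hu]; linarith
  | vcut S S₁ S₂ B z h1 h2 hU hd _ _ _ _ ih1 ih2 =>
    intro hl hb
    have hv : S.val = S₁.val + S₂.val := by
      rw [← hU, ← Finset.disjUnion_eq_union _ _ hd]; rfl
    rw [hv]
    exact .v _ _ (z - B.l) (B.r - z) _ _ (by linarith) (ih1 h1 hb) (ih2 h2 hb)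
  | hcut S S₁ S₂ B z h1 h2 hU hd _ _ _ _ ih1 ih2 =>
    intro hl hb
    have hv : S.val = S₁.val + S₂.val := by
      rw [← hU, ← Finset.disjUnion_eq_union _ _ hd]; rfl
    rw [hv]
    refine .h _ _ _ ⌊(z - B.b) / u⌋₊ ⌊(B.t - z) / u⌋₊ _ (Nat.le_floor ?_) (ih1 hl h1) (ih2 hl h2)
    have e1 := Nat.floor_le (div_nonneg (sub_nonneg.2 h1) hu.le)
    have e2 := Nat.floor_le (div_nonneg (sub_nonneg.2 h2) hu.le)
    have e3 : (B.t - B.b) / u = (z - B.b) / u + (B.t - z) / u := by ring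
    push_cast
    linarith

/-! ### Repacking into rows -/

/-- `Good w h u S W p m`: in every box of width at least `W` and height at least `p` units `u`,
the items of `S` can be placed inside at most `m` guillotine-separable boxes, the items of each
box being side by side.  The placement is defined for all items but only constrained on `S`. -/
def Good {n : ℕ} (w h : Fin n → ℝ) (u : ℝ) (S : Multiset (Fin n)) (W : ℝ) (p m : ℕ) : Prop :=
  S.Nodup → ∀ B : Box, B.l + W ≤ B.r → B.b + p * u ≤ B.t →
    ∃ (β : Type) (_ : Fintype β) (_ : DecidableEq β) (Bx : β → Box) (asg : Fin n → β)
      (x' y' : Fin n → ℝ),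
      Fintype.card β ≤ m ∧ GSep Bx Finset.univ B ∧
      (∀ i ∈ S, (rectOf x' y' w h i).Inside (Bx (asg i))) ∧
      ∀ i ∈ S, ∀ i' ∈ S, asg i = asg i' → i ≠ i' →
        x' i + w i ≤ x' i' ∨ x' i' + w i' ≤ x' i

lemma Good.mono {n : ℕ} {w h : Fin n → ℝ} {u : ℝ} {S : Multiset (Fin n)} {W W' : ℝ} {p m m' : ℕ}
    (hg : Good w h u S W p m) (hW : W ≤ W') (hm : m ≤ m') : Good w h u S W' p m' := by
  intro hS B hB1 hB2
  obtain ⟨β, i1, i2, Bx, asg, x', y', a, b⟩ := hg hS B (by linarith) hB2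
  exact ⟨β, i1, i2, Bx, asg, x', y', a.trans hm, b⟩

/-- Items of total width at most `W` and height at most `p` units form a single row. -/
lemma Good.row {n : ℕ} {w h : Fin n → ℝ} {u : ℝ} (hu : 0 < u) (hw : ∀ i, 0 < w i)
    {k : Fin n → ℕ} (hk : ∀ i, h i = k i * u) {S : Multiset (Fin n)} {W : ℝ} {p : ℕ}
    (hW : (S.map w).sum ≤ W) (hp : ∀ i ∈ S, k i ≤ p) : Good w h u S W p 1 := by
  intro hS B hB1 hB2
  lift S to Finset (Fin n) using hS
  change ∑ i ∈ S, w i ≤ W at hW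
  -- Items are placed from left to right in the order of their indices.
  have key : ∀ i ∈ S, ∀ T : Finset (Fin n), S.filter (· < i) ⊆ T → i ∈ T →
      ∑ j ∈ S.filter (· < i), w j + w i ≤ ∑ j ∈ T, w j := by
    intro i hi T hT hiT
    rw [add_comm, ← Finset.sum_insert (by simp)]
    exact Finset.sum_le_sum_of_subset_of_nonneg (Finset.insert_subset hiT hT)
      fun j _ _ => (hw j).le
  have ord : ∀ i ∈ S, ∀ j ∈ S, i < j →
      ∑ a ∈ S.filter (· < i), w a + w i ≤ ∑ a ∈ S.filter (· < j), w a := by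
    intro i hi j hj hij
    refine key i hi _ (fun a ha => ?_) (by simp [hi, hij])
    rw [Finset.mem_filter] at ha ⊢
    exact ⟨ha.1, ha.2.trans hij⟩
  have hpu : (0 : ℝ) ≤ p * u := by positivity
  refine ⟨Unit, inferInstance, inferInstance, fun _ => B, fun _ => (),
    fun i => B.l + ∑ j ∈ S.filter (· < i), w j, fun _ => B.b, by simp, ?_, ?_, ?_⟩
  · exact GSep.single () B ⟨le_rfl, le_rfl, le_rfl, le_rfl⟩
  · intro i hi
    have h1 := key i hi S (Finset.filter_subset _ _) hi
    have h2 : (0 : ℝ) ≤ ∑ j ∈ S.filter (· < i), w j := Finset.sum_nonneg fun j _ => (hw j).le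
    have h3 : (k i : ℝ) * u ≤ p * u :=
      mul_le_mul_of_nonneg_right (by exact_mod_cast hp i hi) hu.le
    have h4 := hk i
    refine ⟨?_, ?_, ?_, ?_⟩ <;> simp only [rectOf] <;> linarith
  · intro i hi j hj _ hij
    rcases lt_or_gt_of_ne hij with hlt | hlt
    · left; have := ord i hi j hj hlt; linarith
    · right; have := ord j hj i hi hlt; linarith

/-- Two repackings in disjoint boxes `B₁`, `B₂` whose cut structures combine to one of `B` can be
put together; this is the common part of the vertical and the horizontal case. -/
lemma Good.combine {n : ℕ} {w h : Fin n → ℝ} {u : ℝ} {S₁ S₂ : Multiset (Fin n)}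
    {W₁ W₂ : ℝ} {p₁ p₂ m₁ m₂ : ℕ} {B B₁ B₂ : Box} (hS : (S₁ + S₂).Nodup)
    (g1 : Good w h u S₁ W₁ p₁ m₁) (g2 : Good w h u S₂ W₂ p₂ m₂)
    (h1 : B₁.l + W₁ ≤ B₁.r) (h1' : B₁.b + p₁ * u ≤ B₁.t)
    (h2 : B₂.l + W₂ ≤ B₂.r) (h2' : B₂.b + p₂ * u ≤ B₂.t)
    (hB : ∀ (β γ : Type) [Fintype β] [Fintype γ] [DecidableEq β] [DecidableEq γ]
      (r : β → Box) (s : γ → Box), GSep r Finset.univ B₁ → GSep s Finset.univ B₂ →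
      GSep (Sum.elim r s) Finset.univ B) :
    ∃ (β : Type) (_ : Fintype β) (_ : DecidableEq β) (Bx : β → Box) (asg : Fin n → β)
      (x' y' : Fin n → ℝ),
      Fintype.card β ≤ m₁ + m₂ ∧ GSep Bx Finset.univ B ∧
      (∀ i ∈ S₁ + S₂, (rectOf x' y' w h i).Inside (Bx (asg i))) ∧
      ∀ i ∈ S₁ + S₂, ∀ i' ∈ S₁ + S₂, asg i = asg i' → i ≠ i' →
        x' i + w i ≤ x' i' ∨ x' i' + w i' ≤ x' i := by
  obtain ⟨n1, n2, hd⟩ := Multiset.nodup_add.1 hS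
  obtain ⟨β, _, _, r, f, x1, y1, c1, s1, a1, b1⟩ := g1 n1 B₁ h1 h1'
  obtain ⟨γ, _, _, s, g, x2, y2, c2, s2, a2, b2⟩ := g2 n2 B₂ h2 h2'
  have hn : ∀ i ∈ S₂, i ∉ S₁ := fun i hi hi' => (Multiset.disjoint_left.1 hd) hi' hi
  refine ⟨β ⊕ γ, inferInstance, inferInstance, Sum.elim r s,
    fun i => if i ∈ S₁ then .inl (f i) else .inr (g i),
    fun i => if i ∈ S₁ then x1 i else x2 i, fun i => if i ∈ S₁ then y1 i else y2 i,
    ?_, hB _ _ _ _ s1 s2, ?_, ?_⟩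
  · rw [Fintype.card_sum]; omega
  · intro i hi
    rcases Multiset.mem_add.1 hi with hi | hi
    · have := a1 i hi
      simpa [rectOf, hi] using this
    · have := a2 i hi
      simpa [rectOf, hn i hi] using this
  · intro i hi j hj he hij
    rcases Multiset.mem_add.1 hi with hi | hi <;> rcases Multiset.mem_add.1 hj with hj | hj
    · simp only [hi, hj, if_true, Sum.inl.injEq] at he ⊢
      exact b1 i hi j hj he hij
    · simp [hi, hn j hj] at he
    · simp [hj, hn i hi] at he
    · simp only [hn i hi, hn j hj, if_false, Sum.inr.injEq] at he ⊢
      exact b2 i hi j hj he hij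

lemma Good.v {n : ℕ} {w h : Fin n → ℝ} {u : ℝ} {S₁ S₂ : Multiset (Fin n)} {W₁ W₂ : ℝ}
    {p m₁ m₂ : ℕ} (h1 : 0 ≤ W₁) (h2 : 0 ≤ W₂)
    (g1 : Good w h u S₁ W₁ p m₁) (g2 : Good w h u S₂ W₂ p m₂) :
    Good w h u (S₁ + S₂) (W₁ + W₂) p (m₁ + m₂) := by
  intro hS B hB1 hB2
  exact Good.combine (B₁ := ⟨B.l, B.l + W₁, B.b, B.t⟩) (B₂ := ⟨B.l + W₁, B.r, B.b, B.t⟩) hS g1 g2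
    le_rfl hB2 (by simp only; linarith) hB2
    fun _ _ _ _ _ _ _ _ q1 q2 => GSep.vsum (by linarith) (by linarith) q1 q2

lemma Good.h {n : ℕ} {w h : Fin n → ℝ} {u : ℝ} (hu : 0 < u) {S₁ S₂ : Multiset (Fin n)} {W : ℝ}
    {p₁ p₂ m₁ m₂ : ℕ} (g1 : Good w h u S₁ W p₁ m₁) (g2 : Good w h u S₂ W p₂ m₂) :
    Good w h u (S₁ + S₂) W (p₁ + p₂) (m₁ + m₂) := by
  intro hS B hB1 hB2
  have e1 : (0 : ℝ) ≤ p₁ * u := by positivity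
  have e2 : (0 : ℝ) ≤ p₂ * u := by positivity
  push_cast at hB2
  exact Good.combine (B₁ := ⟨B.l, B.r, B.b, B.b + p₁ * u⟩) (B₂ := ⟨B.l, B.r, B.b + p₁ * u, B.t⟩)
    hS g1 g2 hB1 le_rfl hB1 (by simp only; linarith)
    fun _ _ _ _ _ _ _ _ q1 q2 => GSep.hsum (by linarith) (by linarith) q1 q2

/-- A repacked piece and finitely many further ones of the same height, put side by side. -/
lemma Good.sum {n : ℕ} {w h : Fin n → ℝ} {u : ℝ} {p : ℕ} {R : Multiset (Fin n)} {W₀ : ℝ}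
    {m₀ : ℕ} (hW : 0 ≤ W₀) (h0 : Good w h u R W₀ p m₀) (s : Finset ℕ)
    (A : ℕ → Multiset (Fin n)) (V : ℕ → ℝ) (m : ℕ → ℕ) (hV : ∀ a ∈ s, 0 ≤ V a)
    (hA : ∀ a ∈ s, Good w h u (A a) (V a) p (m a)) :
    Good w h u (R + ∑ a ∈ s, A a) (W₀ + ∑ a ∈ s, V a) p (m₀ + ∑ a ∈ s, m a) := by
  induction s using Finset.induction_on with
  | empty => simpa using h0
  | insert b s hb ih =>
    have ih' := ih (fun a ha => hV a (Finset.mem_insert_of_mem ha))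
      (fun a ha => hA a (Finset.mem_insert_of_mem ha))
    have hn : 0 ≤ W₀ + ∑ a ∈ s, V a :=
      add_nonneg hW (Finset.sum_nonneg fun a ha => hV a (Finset.mem_insert_of_mem ha))
    have := Good.v (hV b (Finset.mem_insert_self _ _)) hn (hA b (Finset.mem_insert_self _ _)) ih'
    rw [Finset.sum_insert hb, Finset.sum_insert hb, Finset.sum_insert hb]
    rwa [add_left_comm R, add_left_comm W₀, add_left_comm m₀]

lemma one_add_sum_three_pow_le (p : ℕ) :
    1 + ∑ a ∈ Finset.Ico 1 p, (3 ^ a + 3 ^ (p - a)) ≤ 3 ^ p := by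
  have hr : ∑ a ∈ Finset.Ico 1 p, 3 ^ (p - a) = ∑ a ∈ Finset.Ico 1 p, 3 ^ a := by
    refine Finset.sum_nbij' (fun a => p - a) (fun a => p - a) ?_ ?_ ?_ ?_ fun _ _ => rfl <;>
      · intro a ha
        simp only [Finset.mem_Ico] at ha ⊢
        omega
  have hs : ∀ p : ℕ, 1 + 2 * ∑ a ∈ Finset.Ico 1 p, 3 ^ a ≤ 3 ^ p := by
    intro p
    induction p with
    | zero => simp
    | succ p ih =>
      rcases Nat.eq_zero_or_pos p with rfl | hp
      · simp
      · have hp' : 1 ≤ p := hp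
        rw [Finset.sum_Ico_succ_top hp', pow_succ]
        omega
  rw [Finset.sum_add_distrib, hr, ← two_mul]
  exact hs p

/-- The recursion on the integral height: merge by the height of the first horizontal cut
(`Guil.decomp`), then repack both sides of each merged cut. -/
lemma Guil.good {n : ℕ} {w h : Fin n → ℝ} {u : ℝ} (hu : 0 < u) (hw : ∀ i, 0 < w i)
    {k : Fin n → ℕ} (hk : ∀ i, h i = k i * u) (hk1 : ∀ i, 1 ≤ k i) (p : ℕ) :
    ∀ (S : Multiset (Fin n)) (W : ℝ), Guil w k S W p → Good w h u S W p (3 ^ p) := by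
  induction p using Nat.strong_induction_on with
  | _ p ih =>
    intro S W hG
    obtain ⟨R, A, C, W₀, V, rfl, e1, e2, e3, e4, e5⟩ := hG.decomp hk1 p le_rfl
    refine (Good.sum e2 (Good.row hu hw hk e3 e4) (Finset.Ico 1 p) (fun a => A a + C a) V
      (fun a => 3 ^ a + 3 ^ (p - a)) (fun a ha => (e5 a ha).1.nonneg) ?_).mono e1
      (one_add_sum_three_pow_le p)
    intro a ha
    have ha' := Finset.mem_Ico.1 ha
    have := Good.h hu (ih a (by omega) _ _ (e5 a ha).1) (ih (p - a) (by omega) _ _ (e5 a ha).2)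
    rwa [show a + (p - a) = p by omega] at this

/-- Structural lemma for guillotine-separable packings with rounded heights:
if every rectangle inside the box `B` has height an integer multiple of
`(B.t − B.b)/t`, the packing is guillotine separable, and every vertical line meets at
most `1/δ` rectangles, then the items can be repacked into at most `((1/δ)·2^t)^(1/δ)`
pairwise non-overlapping, guillotine-separable boxes inside `B` such that within each
box the items are stacked side by side or on top of one another. -/
theorem guillotine_constant_boxes (t : ℕ) (ht : 1 ≤ t) (δ : ℝ) (hδ0 : 0 < δ) (hδ1 : δ ≤ 1)
    (n : ℕ) (B : Box) (hBx : B.l < B.r) (hBy : B.b < B.t)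
    (w h x y : Fin n → ℝ)
    (hwpos : ∀ i, 0 < w i) (hhpos : ∀ i, 0 < h i)
    (hmult : ∀ i, ∃ k : ℕ, h i = (k : ℝ) * ((B.t - B.b) / (t : ℝ)))
    (hin : ∀ i, (rectOf x y w h i).Inside B)
    (hdisj : ∀ i j, i ≠ j → (rectOf x y w h i).NonOverlap (rectOf x y w h j))
    (hsep : GSep (rectOf x y w h) Finset.univ B)
    (hstack : ∀ c : ℝ,
      ((Finset.univ.filter (fun i => x i < c ∧ c < x i + w i)).card : ℝ) ≤ 1 / δ) :
    ∃ (m : ℕ) (Bx : Fin m → Box) (asg : Fin n → Fin m) (x' y' : Fin n → ℝ),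
      (m : ℝ) ≤ (1 / δ * 2 ^ t) ^ (1 / δ : ℝ) ∧
      (∀ j, (Bx j).Inside B) ∧
      (∀ j j', j ≠ j' → (Bx j).NonOverlap (Bx j')) ∧
      GSep Bx Finset.univ B ∧
      (∀ i, (rectOf x' y' w h i).Inside (Bx (asg i))) ∧
      (∀ i j, i ≠ j → (rectOf x' y' w h i).NonOverlap (rectOf x' y' w h j)) ∧
      (∀ j : Fin m,
        (∀ i i', asg i = j → asg i' = j → i ≠ i' →
          x' i + w i ≤ x' i' ∨ x' i' + w i' ≤ x' i) ∨
        (∀ i i', asg i = j → asg i' = j → i ≠ i' →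
          y' i + h i ≤ y' i' ∨ y' i' + h i' ≤ y' i)) := by
  rcases lt_or_ge (1 / δ) 2 with hK | hK
  · have hK1 : 1 ≤ 1 / δ := (one_le_div hδ0).2 hδ1
    refine ⟨1, fun _ => B, fun _ => 0, x, y, ?_, fun _ => ⟨le_rfl, le_rfl, le_rfl, le_rfl⟩,
      fun j j' hj => absurd (Subsingleton.elim j j') hj, ?_, hin, hdisj, fun j => Or.inl ?_⟩
    · have h2 : (1 : ℝ) ≤ 2 ^ t := one_le_pow₀ (by norm_num)
      have := Real.one_le_rpow (x := 1 / δ * 2 ^ t) (z := 1 / δ) (by nlinarith) (by linarith)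
      simpa using this
    · exact GSep.single (rect := fun _ : Fin 1 => B) 0 B ⟨le_rfl, le_rfl, le_rfl, le_rfl⟩
    · intro i i' _ _ hne
      by_contra! hcon
      -- Two items overlapping horizontally are both met by a suitable vertical line.
      obtain ⟨c, hc1, hc2⟩ := exists_between
        (show max (x i) (x i') < min (x i + w i) (x i' + w i') by
          have := hwpos i
          have := hwpos i'
          rw [max_lt_iff, lt_min_iff, lt_min_iff]
          exact ⟨⟨by linarith, hcon.2⟩, hcon.1, by linarith⟩)
      rw [max_lt_iff] at hc1
      rw [lt_min_iff] at hc2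
      have hsub : ({i, i'} : Finset (Fin n)) ⊆
          Finset.univ.filter (fun i => x i < c ∧ c < x i + w i) := by
        intro a ha
        rw [Finset.mem_insert, Finset.mem_singleton] at ha
        rw [Finset.mem_filter]
        rcases ha with rfl | rfl
        · exact ⟨Finset.mem_univ _, hc1.1, hc2.1⟩
        · exact ⟨Finset.mem_univ _, hc1.2, hc2.2⟩
      have hcard := Finset.card_le_card hsub
      rw [Finset.card_pair hne] at hcard
      have h3 : (2 : ℝ) ≤
          ((Finset.univ.filter (fun i => x i < c ∧ c < x i + w i)).card : ℝ) := by
        exact_mod_cast hcard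
      linarith [hstack c]
  · have ht0 : (0 : ℝ) < t := by exact_mod_cast ht
    have hH : 0 < B.t - B.b := by linarith
    set u := (B.t - B.b) / (t : ℝ) with hu_def
    have hu : 0 < u := div_pos hH ht0
    choose k hk using hmult
    have hk1 : ∀ i, 1 ≤ k i := by
      intro i
      by_contra! hlt
      have h0 : k i = 0 := by omega
      have := hhpos i
      rw [hk i, h0] at this
      simp at this
    have htu : (t : ℝ) * u = B.t - B.b := by rw [hu_def]; field_simp
    have hfl : ⌊(B.t - B.b) / u⌋₊ = t := by
      rw [← htu, mul_div_assoc, div_self hu.ne', mul_one, Nat.floor_natCast]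
    have hG := hsep.guil hu hk hBx.le hBy.le
    rw [hfl] at hG
    obtain ⟨β, _, _, Bx, asg, x', y', hc, hs, ha, hb⟩ :=
      hG.good hu hwpos hk hk1 t _ _ Finset.univ.nodup B (by linarith) (by linarith)
    let e := Fintype.equivFin β
    have hs' : GSep (fun j => Bx (e.symm j)) Finset.univ B := by
      have := hs.map (r' := fun j => Bx (e.symm j)) e.toEmbedding (fun i => by simp)
      rwa [Finset.map_univ_equiv] at this
    have hin' : ∀ i, (rectOf x' y' w h i).Inside (Bx (asg i)) :=
      fun i => ha i (Finset.mem_univ i)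
    refine ⟨Fintype.card β, fun j => Bx (e.symm j), fun i => e (asg i), x', y', ?_,
      fun j => hs'.inside j (Finset.mem_univ j),
      fun j j' hj => hs'.nonOverlap j (Finset.mem_univ j) j' (Finset.mem_univ j') hj, hs',
      fun i => by simpa using hin' i, ?_, fun j => Or.inl ?_⟩
    · have h2 : (1 : ℝ) ≤ 2 ^ t := one_le_pow₀ (by norm_num)
      have h3 : (Fintype.card β : ℝ) ≤ 3 ^ t := by exact_mod_cast hc
      have h4 : (3 : ℝ) ^ t ≤ (2 ^ t) ^ 2 := by
        rw [← pow_mul, mul_comm, pow_mul]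
        exact pow_le_pow_left₀ (by norm_num) (by norm_num) t
      have h5 : (2 : ℝ) ^ t ≤ 1 / δ * 2 ^ t := by nlinarith
      have h6 : (1 / δ * 2 ^ t : ℝ) ^ (2 : ℝ) ≤ (1 / δ * 2 ^ t) ^ (1 / δ : ℝ) :=
        Real.rpow_le_rpow_of_exponent_le (h2.trans h5) hK
      rw [Real.rpow_two] at h6
      have h7 : ((2 : ℝ) ^ t) ^ 2 ≤ (1 / δ * 2 ^ t) ^ 2 :=
        pow_le_pow_left₀ (by positivity) h5 2
      linarith
    · intro i i' hne
      by_cases heq : asg i = asg i'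
      · rcases hb i (Finset.mem_univ i) i' (Finset.mem_univ i') heq hne with h1 | h1
        · exact Or.inl h1
        · exact Or.inr (Or.inl h1)
      · obtain ⟨a1, a2, a3, a4⟩ := hin' i
        obtain ⟨b1, b2, b3, b4⟩ := hin' i'
        rcases hs.nonOverlap _ (Finset.mem_univ _) _ (Finset.mem_univ _) heq with
          h1 | h1 | h1 | h1
        · exact Or.inl (by linarith)
        · exact Or.inr (Or.inl (by linarith))
        · exact Or.inr (Or.inr (Or.inl (by linarith)))
        · exact Or.inr (Or.inr (Or.inr (by linarith)))
    · intro i i' hi hi' hne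
      exact hb i (Finset.mem_univ i) i' (Finset.mem_univ i')
        (e.injective (hi.trans hi'.symm)) hne
end

section
/- Steinberg's condition: a set of rectangles I' with maximum width w_max ≤ w and maximum height h_max ≤ h can be packed into a box of width w and height h provided 2·a(I') ≤ w·h − (2·w_max − w)_+ · (2·h_max − h)_+, where a(I') is the total area and x_+ = max(x,0). In particular, if every rectangle has height at most h/2 and total area at most w·h/2, the set packs into the box. -/
/-!
The proof is by strong induction on the number of rectangles, for all boxes `u × v` at once.
Rectangles with a vanishing side can all be put at the origin, so the sides are taken positive.

* Some rectangle has width at least `u / 2` (`packs_of_wide`). Stack the rectangles of width at least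
  `u / 2` in the lower left corner, widest at the bottom, up to height `t`. Hang the other
  rectangles that are higher than `v - t` from the top side, the highest one at the right. If a
  stacked rectangle of width `α` and a hanging one of height `β` overlapped, the stack and the
  hanging column would have area more than
  `α (v - β) + β (u - α) = (u v - (2 α - u) (2 β - v)) / 2`, against the area condition. The rest
  satisfies the area condition for the free box above the stack and to the left of the column.
* Some rectangle has height at least `v / 2`: the same, with the axes exchanged.
* All rectangles have sides less than `u / 2` and `v / 2`. Call a rectangle wide if its width
  exceeds `u / 4`, high if its height exceeds `v / 4`. If two rectangles are both wide and high,
  stacking them uses a vertical or, with the axes exchanged, a horizontal strip whose complement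
  satisfies the area condition (`pair_strip`). If the wide rectangles have area at most `3 u v / 8`
  and are not all the rectangles, the box can be cut by a vertical line (`packs_of_few_wide`);
  similarly for the high ones. If none of this is possible and there are at least two rectangles,
  then either all of them are wide and high, or those that are have total area more than `u v / 4`,
  which is more than a single one can have; so there are two wide and high ones after all.
-/

namespace Steinberg

/-! ### Packings and the area condition -/

variable {ι : Type*}

/-- The rectangles `a i × b i`, `i ∈ s`, fit into the box `[0, u] × [0, v]` without rotation and
without overlap; `(x i, y i)` is the lower left corner of the `i`-th one. -/
def Packs (s : Finset ι) (a b : ι → ℝ) (u v : ℝ) : Prop :=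
  ∃ x y : ι → ℝ,
    (∀ i ∈ s, 0 ≤ x i ∧ x i + a i ≤ u ∧ 0 ≤ y i ∧ y i + b i ≤ v) ∧
    (∀ i ∈ s, ∀ j ∈ s, i ≠ j →
      x i + a i ≤ x j ∨ x j + a j ≤ x i ∨ y i + b i ≤ y j ∨ y j + b j ≤ y i)

/-- The hypothesis of Steinberg's theorem, with arbitrary upper bounds `A`, `B` in place of the
maximal width and height. -/
def Cond (s : Finset ι) (a b : ι → ℝ) (u v : ℝ) : Prop :=
  ∃ A B : ℝ, (∀ i ∈ s, a i ≤ A) ∧ (∀ i ∈ s, b i ≤ B) ∧ A ≤ u ∧ B ≤ v ∧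
    2 * ∑ i ∈ s, a i * b i ≤ u * v - max (2 * A - u) 0 * max (2 * B - v) 0

theorem Packs.swap {s : Finset ι} {a b : ι → ℝ} {u v : ℝ} (h : Packs s a b u v) :
    Packs s b a v u := by
  obtain ⟨x, y, h1, h2⟩ := h
  refine ⟨y, x, fun i hi => ?_, fun i hi j hj hij => ?_⟩
  · have := h1 i hi
    tauto
  · have := h2 i hi j hj hij
    tauto

theorem Cond.swap {s : Finset ι} {a b : ι → ℝ} {u v : ℝ} (h : Cond s a b u v) :
    Cond s b a v u := by
  obtain ⟨A, B, h1, h2, h3, h4, h5⟩ := h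
  refine ⟨B, A, h2, h1, h4, h3, ?_⟩
  simp only [mul_comm (b _)]
  linarith [mul_comm u v, mul_comm (max (2 * A - u) 0) (max (2 * B - v) 0)]

/-- If all heights are at most half the height of the box, the correction term vanishes. -/
theorem cond_of_low {s : Finset ι} {a b : ι → ℝ} {u v : ℝ} (hv : 0 ≤ v)
    (ha : ∀ i ∈ s, a i ≤ u) (hb : ∀ i ∈ s, 2 * b i ≤ v)
    (hS : 2 * ∑ i ∈ s, a i * b i ≤ u * v) : Cond s a b u v := by
  refine ⟨u, v / 2, ha, fun i hi => by linarith [hb i hi], le_rfl, by linarith, ?_⟩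
  have : max (2 * (v / 2) - v) 0 = 0 := by
    rw [max_eq_right]
    linarith
  rw [this]
  linarith

theorem packs_singleton {a b : ι → ℝ} {u v : ℝ} (i : ι) (ha : a i ≤ u) (hb : b i ≤ v) :
    Packs {i} a b u v := by
  refine ⟨fun _ => 0, fun _ => 0, fun j hj => ?_, fun j hj k hk hjk => ?_⟩
  · rw [Finset.mem_singleton] at hj
    subst hj
    simp [ha, hb]
  · rw [Finset.mem_singleton] at hj hk
    exact absurd (hj.trans hk.symm) hjk

variable [DecidableEq ι]

/-- Two packed boxes of the same height can be put side by side. -/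
theorem Packs.beside {s t r : Finset ι} {a b : ι → ℝ} {u₁ u₂ u v : ℝ}
    (h1 : Packs s a b u₁ v) (h2 : Packs t a b u₂ v) (hr : r ⊆ s ∪ t)
    (hu : u₁ + u₂ = u) (hu1 : 0 ≤ u₁) (hu2 : 0 ≤ u₂) : Packs r a b u v := by
  obtain ⟨x, y, h1, h1'⟩ := h1
  obtain ⟨x', y', h2, h2'⟩ := h2
  have key : ∀ i ∈ r, i ∉ s → i ∈ t := fun i hi his =>
    (Finset.mem_union.1 (hr hi)).resolve_left his
  refine ⟨fun i => if i ∈ s then x i else u₁ + x' i, fun i => if i ∈ s then y i else y' i,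
    fun i hi => ?_, fun i hi j hj hij => ?_⟩
  · by_cases his : i ∈ s
    · have := h1 i his
      simp only [his, if_true]
      refine ⟨?_, ?_, ?_, ?_⟩ <;> linarith
    · have := h2 i (key i hi his)
      simp only [his, if_false]
      refine ⟨?_, ?_, ?_, ?_⟩ <;> linarith
  · by_cases his : i ∈ s <;> by_cases hjs : j ∈ s <;> simp only [his, hjs, if_true, if_false]
    · exact h1' i his j hjs hij
    · left
      have := h1 i his
      have := h2 j (key j hj hjs)
      linarith
    · right; left
      have := h1 j hjs
      have := h2 i (key i hi his)
      linarith
    · rcases h2' i (key i hi his) j (key j hj hjs) hij with h | h | h | h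
      · left; linarith
      · right; left; linarith
      · right; right; left; exact h
      · right; right; right; exact h

/-- Two rectangles stacked on top of each other. -/
theorem packs_pair {a b : ι → ℝ} {u v : ℝ} {i k : ι} (hi : a i ≤ u) (hk : a k ≤ u)
    (hbi : 0 ≤ b i) (hbk : 0 ≤ b k) (hb : b i + b k ≤ v) :
    Packs {i, k} a b u v := by
  have h1 : Packs ({i} : Finset ι) b a (b i) u := packs_singleton i le_rfl hi
  have h2 : Packs ({k} : Finset ι) b a (v - b i) u := packs_singleton k (by linarith) hk
  exact (h1.beside h2 (r := {i, k}) (by rw [Finset.insert_eq]) (by ring) hbi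
    (by linarith)).swap

/-! ### A rectangle of width at least half the box -/

/-- Segments of lengths `g` can be laid end to end, in decreasing order of `f`. The last clause
of the first part holds because `f` is at least `f i` on all segments laid up to the `i`-th one. -/
theorem exists_stack (T : Finset ι) (f g : ι → ℝ) (hf : ∀ i ∈ T, 0 ≤ f i)
    (hg : ∀ i ∈ T, 0 ≤ g i) :
    ∃ p : ι → ℝ, (∀ i ∈ T, 0 ≤ p i ∧ p i + g i ≤ ∑ k ∈ T, g k ∧
        f i * (p i + g i) ≤ ∑ k ∈ T, f k * g k) ∧
      (∀ i ∈ T, ∀ j ∈ T, i ≠ j → p i + g i ≤ p j ∨ p j + g j ≤ p i) := by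
  induction T using Finset.induction_on_min_value f with
  | empty => exact ⟨fun _ => 0, by simp, by simp⟩
  | insert t T ht hmin ih =>
    obtain ⟨p, h1, h2⟩ := ih (fun i hi => hf i (Finset.mem_insert_of_mem hi))
      (fun i hi => hg i (Finset.mem_insert_of_mem hi))
    have hft := hf t (Finset.mem_insert_self _ _)
    have hgt := hg t (Finset.mem_insert_self _ _)
    have hne : ∀ i ∈ T, i ≠ t := fun i hi h => ht (h ▸ hi)
    have hsum : f t * ∑ k ∈ T, g k ≤ ∑ k ∈ T, f k * g k := by
      rw [Finset.mul_sum]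
      exact Finset.sum_le_sum fun k hk =>
        mul_le_mul_of_nonneg_right (hmin k hk) (hg k (Finset.mem_insert_of_mem hk))
    refine ⟨fun i => if i = t then ∑ k ∈ T, g k else p i, fun i hi => ?_,
      fun i hi j hj hij => ?_⟩
    · rw [Finset.sum_insert ht, Finset.sum_insert ht]
      rcases Finset.mem_insert.1 hi with rfl | hi'
      · simp only [if_true]
        refine ⟨Finset.sum_nonneg fun k hk => hg k (Finset.mem_insert_of_mem hk), by linarith, ?_⟩
        rw [mul_add]
        linarith
      · simp only [hne i hi', if_false]
        obtain ⟨q1, q2, q3⟩ := h1 i hi'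
        exact ⟨q1, by linarith, by linarith [mul_nonneg hft hgt]⟩
    · rcases Finset.mem_insert.1 hi with rfl | hi' <;> rcases Finset.mem_insert.1 hj with rfl | hj'
      · exact absurd rfl hij
      · right
        simp only [if_true, hne j hj', if_false]
        exact (h1 j hj').2.1
      · left
        simp only [if_true, hne i hi', if_false]
        exact (h1 i hi').2.1
      · simp only [hne i hi', hne j hj', if_false]
        exact h2 i hi' j hj' hij

/-- The case of a rectangle of width at least half the width of the box. -/
theorem packs_of_wide {s : Finset ι} {a b : ι → ℝ} {u v : ℝ}
    (ha : ∀ i ∈ s, 0 < a i) (hb : ∀ i ∈ s, 0 < b i) (hc : Cond s a b u v)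
    (hwide : ∃ i ∈ s, u ≤ 2 * a i)
    (ih : ∀ r ⊂ s, ∀ u' v' : ℝ, Cond r a b u' v' → Packs r a b u' v') :
    Packs s a b u v := by
  obtain ⟨A, B, hA, hB, hAu, hBv, hS⟩ := hc
  obtain ⟨i₀, hi₀, hwi₀⟩ := hwide
  have hu : 0 < u := by linarith [ha i₀ hi₀, hA i₀ hi₀]
  have hM : 0 ≤ max (2 * A - u) 0 * max (2 * B - v) 0 :=
    mul_nonneg (le_max_right _ _) (le_max_right _ _)
  set T := s.filter (fun i => u ≤ 2 * a i) with hT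
  set t := ∑ i ∈ T, b i with ht
  set C := s.filter (fun i => ¬ u ≤ 2 * a i ∧ v - t < b i) with hC
  set X := ∑ i ∈ C, a i with hX
  set R := s.filter (fun i => ¬ u ≤ 2 * a i ∧ ¬ v - t < b i) with hR
  have hTs : ∀ i ∈ T, i ∈ s ∧ u ≤ 2 * a i := fun i hi => Finset.mem_filter.1 hi
  have hCs : ∀ i ∈ C, i ∈ s ∧ ¬ u ≤ 2 * a i ∧ v - t < b i := fun i hi => Finset.mem_filter.1 hi
  have hRs : ∀ i ∈ R, i ∈ s ∧ ¬ u ≤ 2 * a i ∧ ¬ v - t < b i := fun i hi => Finset.mem_filter.1 hi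
  have hsum : ∑ i ∈ s, a i * b i
      = ∑ i ∈ T, a i * b i + (∑ i ∈ C, a i * b i + ∑ i ∈ R, a i * b i) := by
    rw [← Finset.sum_filter_add_sum_filter_not s (fun i => u ≤ 2 * a i),
      ← Finset.sum_filter_add_sum_filter_not (s.filter fun i => ¬ u ≤ 2 * a i)
        (fun i => v - t < b i), Finset.filter_filter, Finset.filter_filter]
  have hR0 : 0 ≤ ∑ i ∈ R, a i * b i :=
    Finset.sum_nonneg fun i hi => (mul_pos (ha i (hRs i hi).1) (hb i (hRs i hi).1)).le
  have hC0 : 0 ≤ ∑ i ∈ C, a i * b i :=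
    Finset.sum_nonneg fun i hi => (mul_pos (ha i (hCs i hi).1) (hb i (hCs i hi).1)).le
  have hX0 : 0 ≤ X := Finset.sum_nonneg fun i hi => (ha i (hCs i hi).1).le
  have ht0 : 0 ≤ t := Finset.sum_nonneg fun i hi => (hb i (hTs i hi).1).le
  have hTarea : u * t ≤ 2 * ∑ i ∈ T, a i * b i := by
    rw [ht, Finset.mul_sum, Finset.mul_sum]
    refine Finset.sum_le_sum fun i hi => ?_
    nlinarith [(hTs i hi).2, hb i (hTs i hi).1]
  have hCarea : X * (v - t) ≤ ∑ i ∈ C, a i * b i := by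
    rw [hX, Finset.sum_mul]
    exact Finset.sum_le_sum fun i hi =>
      mul_le_mul_of_nonneg_left (hCs i hi).2.2.le (ha i (hCs i hi).1).le
  have htv : t ≤ v := by
    have : u * t ≤ u * v := by linarith
    exact le_of_mul_le_mul_left this hu
  have hXu : 2 * X ≤ u := by
    rcases C.eq_empty_or_nonempty with hCe | hCne
    · have : X = 0 := by rw [hX, hCe, Finset.sum_empty]
      linarith
    · -- the column being nonempty, its area is strictly larger than `X * (v - t)`
      have hlt : X * (v - t) < ∑ i ∈ C, a i * b i := by
        rw [hX, Finset.sum_mul]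
        exact Finset.sum_lt_sum_of_nonempty hCne fun i hi =>
          mul_lt_mul_of_pos_left (hCs i hi).2.2 (ha i (hCs i hi).1)
      by_contra hcon
      push Not at hcon
      nlinarith [mul_nonneg (sub_nonneg.2 hcon.le) (sub_nonneg.2 htv)]
  obtain ⟨p, hp, hp'⟩ := exists_stack T a b (fun i hi => (ha i (hTs i hi).1).le)
    (fun i hi => (hb i (hTs i hi).1).le)
  obtain ⟨q, hq, hq'⟩ := exists_stack C b a (fun i hi => (hb i (hCs i hi).1).le)
    (fun i hi => (ha i (hCs i hi).1).le)
  have hTC : ∀ i ∈ T, ∀ j ∈ C, a i ≤ u - (q j + a j) ∨ p i + b i ≤ v - b j := by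
    intro i hi j hj
    by_contra hcon
    push Not at hcon
    obtain ⟨c1, c2⟩ := hcon
    have e1 := (hp i hi).2.2
    have e2 := (hq j hj).2.2
    simp only [mul_comm (b _) (a _)] at e2
    have hai := ha i (hTs i hi).1
    have hbj := hb j (hCs j hj).1
    have f1 : a i * (v - b j) < a i * (p i + b i) := mul_lt_mul_of_pos_left c2 hai
    have f2 : b j * (u - a i) < b j * (q j + a j) :=
      mul_lt_mul_of_pos_left (by linarith) hbj
    have f3 : (2 * a i - u) * (2 * b j - v) ≤ max (2 * A - u) 0 * max (2 * B - v) 0 := by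
      calc (2 * a i - u) * (2 * b j - v) ≤ (2 * a i - u) * max (2 * B - v) 0 :=
            mul_le_mul_of_nonneg_left
              (le_max_of_le_left (by linarith [hB j (hCs j hj).1])) (by linarith [(hTs i hi).2])
        _ ≤ _ := mul_le_mul_of_nonneg_right
              (le_max_of_le_left (by linarith [hA i (hTs i hi).1])) (le_max_right _ _)
    nlinarith
  -- With the bounds `u / 2` and `v - t` the correction term is exactly `X * (v - t)`.
  have hRcond : Cond R a b (u - X) (v - t) := by
    refine ⟨u / 2, v - t, fun i hi => ?_, fun i hi => ?_, by linarith, le_rfl, ?_⟩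
    · linarith [not_le.1 (hRs i hi).2.1]
    · exact not_lt.1 (hRs i hi).2.2
    · rw [max_eq_left (by linarith), max_eq_left (by linarith)]
      nlinarith
  have hRss : R ⊂ s := by
    refine Finset.ssubset_iff_subset_ne.2 ⟨Finset.filter_subset _ _, fun h => ?_⟩
    exact (hRs i₀ (h ▸ hi₀)).2.1 hwi₀
  obtain ⟨x, y, hxy, hxy'⟩ := ih R hRss _ _ hRcond
  have hcases : ∀ i ∈ s, i ∈ T ∨ (i ∉ T ∧ i ∈ C) ∨ (i ∉ T ∧ i ∉ C ∧ i ∈ R) := by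
    intro i hi
    simp only [hT, hC, hR, Finset.mem_filter, hi, true_and]
    tauto
  refine ⟨fun i => if i ∈ T then 0 else if i ∈ C then u - (q i + a i) else x i,
    fun i => if i ∈ T then p i else if i ∈ C then v - b i else t + y i,
    fun i hi => ?_, fun i hi j hj hij => ?_⟩
  · rcases hcases i hi with h | ⟨h, h'⟩ | ⟨h, h', h''⟩
    · simp only [h, if_true]
      have := hp i h
      refine ⟨le_rfl, ?_, ?_, ?_⟩ <;> linarith [hA i hi]
    · simp only [h, h', if_true, if_false]
      have := hq i h'
      refine ⟨?_, ?_, ?_, ?_⟩ <;> linarith [hB i hi]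
    · simp only [h, h', if_false]
      have := hxy i h''
      refine ⟨?_, ?_, ?_, ?_⟩ <;> linarith
  · rcases hcases i hi with h | ⟨h, h'⟩ | ⟨h, h', h''⟩ <;>
      rcases hcases j hj with k | ⟨k, k'⟩ | ⟨k, k', k''⟩
    · simp only [h, k, if_true]
      have := hp' i h j k hij
      tauto
    · simp only [h, k, k', if_true, if_false]
      rcases hTC i h j k' with h1 | h1
      · left; linarith
      · right; right; left; linarith
    · simp only [h, k, k', if_true, if_false]
      right; right; left
      linarith [hp i h, hxy j k'']
    · simp only [h, h', k, if_true, if_false]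
      rcases hTC j k i h' with h1 | h1
      · right; left; linarith
      · right; right; right; linarith
    · simp only [h, h', k, k', if_true, if_false]
      rcases hq' i h' j k' hij with h1 | h1
      · right; left; linarith
      · left; linarith
    · simp only [h, h', k, k', if_true, if_false]
      right; left
      linarith [hq i h', hxy j k'']
    · simp only [h, h', k, if_true, if_false]
      right; right; right
      linarith [hp j k, hxy i h'']
    · simp only [h, h', k, k', if_true, if_false]
      left
      linarith [hq j k', hxy i h'']
    · simp only [h, h', k, k', if_false]
      rcases hxy' i h'' j k'' hij with h1 | h1 | h1 | h1
      · left; exact h1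
      · right; left; exact h1
      · right; right; left; linarith
      · right; right; right; linarith

/-! ### Rectangles with sides less than half the box -/

/-- If there is a rectangle that is not wide, and the wide ones have area at most `3 u v / 8`, then
the box can be cut by a vertical line into two boxes that satisfy the area condition. -/
theorem packs_of_few_wide {s : Finset ι} {a b : ι → ℝ} {u v : ℝ} (hu : 0 < u) (hv : 0 < v)
    (ha : ∀ i ∈ s, 0 < a i) (hb : ∀ i ∈ s, 0 < b i)
    (ha2 : ∀ i ∈ s, 2 * a i < u) (hb2 : ∀ i ∈ s, 2 * b i < v)
    (hS : 2 * ∑ i ∈ s, a i * b i ≤ u * v)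
    (hex : ∃ i ∈ s, 4 * a i ≤ u)
    (hW : 8 * ∑ i ∈ s.filter (fun i => u < 4 * a i), a i * b i ≤ 3 * (u * v))
    (hs : 1 < s.card)
    (ih : ∀ r ⊂ s, ∀ u' v' : ℝ, Cond r a b u' v' → Packs r a b u' v') :
    Packs s a b u v := by
  have huv : 0 < u * v := mul_pos hu hv
  have hpos : ∀ i ∈ s, 0 < a i * b i := fun i hi => mul_pos (ha i hi) (hb i hi)
  -- `L` is a maximal proper subset that contains the wide rectangles and has area `≤ 3 u v / 8`
  obtain ⟨L, hL, hmax⟩ := (s.powerset.filter (fun L =>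
      s.filter (fun i => u < 4 * a i) ⊆ L ∧ L ≠ s ∧
        8 * ∑ i ∈ L, a i * b i ≤ 3 * (u * v))).exists_max_image Finset.card ⟨_, by
    rw [Finset.mem_filter, Finset.mem_powerset]
    refine ⟨Finset.filter_subset _ _, Finset.Subset.refl _, fun h => ?_, hW⟩
    obtain ⟨i, hi, hi'⟩ := hex
    rw [← h] at hi
    exact absurd (Finset.mem_filter.1 hi).2 (not_lt.2 hi')⟩
  simp only [Finset.mem_filter, Finset.mem_powerset] at hL hmax
  obtain ⟨hLs, hWL, hLne, hLarea⟩ := hL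
  have hthin : ∀ i ∈ s, i ∉ L → 4 * a i ≤ u := fun i hi hiL => by
    by_contra hcon
    exact hiL (hWL (Finset.mem_filter.2 ⟨hi, not_le.1 hcon⟩))
  have hsplit := Finset.sum_sdiff hLs (f := fun i => a i * b i)
  obtain ⟨j, hj, hjL⟩ := Finset.exists_of_ssubset (Finset.ssubset_iff_subset_ne.2 ⟨hLs, hLne⟩)
  have hjarea : 8 * (a j * b j) ≤ u * v := by
    nlinarith [hthin j hj hjL, hb2 j hj, hb j hj, ha j hj]
  have hrest : 4 * ∑ i ∈ s \ L, a i * b i ≤ u * v := by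
    by_cases hins : insert j L = s
    · have : s \ L = {j} := by
        rw [← hins]
        exact Finset.insert_sdiff_cancel hjL
      rw [this, Finset.sum_singleton]
      linarith
    · by_contra hcon
      have hbig : 8 * ∑ i ∈ insert j L, a i * b i ≤ 3 * (u * v) := by
        rw [Finset.sum_insert hjL]
        linarith
      have := hmax (insert j L) ⟨Finset.insert_subset hj hLs,
        hWL.trans (Finset.subset_insert _ _), hins, hbig⟩
      rw [Finset.card_insert_of_notMem hjL] at this
      omega
  have hLne' : L.Nonempty := by
    rw [Finset.nonempty_iff_ne_empty]
    rintro rfl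
    -- otherwise `{j}` would be a larger candidate
    have := hmax {j} ⟨Finset.singleton_subset_iff.2 hj,
      hWL.trans (Finset.empty_subset _), fun h => by
        rw [← h, Finset.card_singleton] at hs
        omega, by
        rw [Finset.sum_singleton]
        linarith⟩
    simp at this
  have hdiff : s \ L ⊂ s := Finset.sdiff_ssubset hLs hLne'
  set σ := ∑ i ∈ L, a i * b i with hσ
  have hσv : 2 * σ / v * v = 2 * σ := by field_simp
  have hσ0 : 0 ≤ σ := Finset.sum_nonneg fun i hi => (hpos i (hLs hi)).le
  have hcut : 2 * σ / v ≤ 3 * u / 4 := by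
    rw [div_le_iff₀ hv]
    linarith
  have hm1 : u / 2 ≤ max (u / 2) (2 * σ / v) := le_max_left _ _
  have hm2 : 2 * σ / v ≤ max (u / 2) (2 * σ / v) := le_max_right _ _
  have hm3 : max (u / 2) (2 * σ / v) ≤ 3 * u / 4 := max_le (by linarith) hcut
  have h1 : Packs L a b (max (u / 2) (2 * σ / v)) v := by
    refine ih L (Finset.ssubset_iff_subset_ne.2 ⟨hLs, hLne⟩) _ _ (cond_of_low hv.le
      (fun i hi => by linarith [ha2 i (hLs hi)]) (fun i hi => (hb2 i (hLs hi)).le) ?_)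
    linarith [mul_le_mul_of_nonneg_right hm2 hv.le]
  have h2 : Packs (s \ L) a b (u - max (u / 2) (2 * σ / v)) v := by
    refine ih _ hdiff _ _ (cond_of_low hv.le (fun i hi => ?_)
      (fun i hi => (hb2 i (Finset.mem_sdiff.1 hi).1).le) ?_)
    · have := hthin i (Finset.mem_sdiff.1 hi).1 (Finset.mem_sdiff.1 hi).2
      linarith
    · rw [sub_mul]
      rcases max_choice (u / 2) (2 * σ / v) with h | h <;> rw [h] <;> linarith
  exact h1.beside h2 (by rw [Finset.union_sdiff_of_subset hLs]) (by ring)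
    (by linarith) (by linarith)

/-- Two wide and high rectangles fill at least half of the vertical strip, or at least half of the
horizontal strip, whose thickness is their larger side. -/
theorem pair_strip {a₁ a₂ b₁ b₂ u v : ℝ} (hu : 0 < u) (hv : 0 < v)
    (ha₁ : u < 4 * a₁) (ha₂ : u < 4 * a₂) (hb₁ : v < 4 * b₁) (hb₂ : v < 4 * b₂) :
    max a₁ a₂ * v ≤ 2 * (a₁ * b₁ + a₂ * b₂) ∨ max b₁ b₂ * u ≤ 2 * (a₁ * b₁ + a₂ * b₂) := by
  by_contra hcon
  push Not at hcon
  obtain ⟨h1, h2⟩ := hcon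
  have p11 := mul_pos (sub_pos.2 ha₁) (sub_pos.2 hb₁)
  have p22 := mul_pos (sub_pos.2 ha₂) (sub_pos.2 hb₂)
  have q1 := mul_pos hu (sub_pos.2 hb₁)
  have q2 := mul_pos hu (sub_pos.2 hb₂)
  have r1 := mul_pos hv (sub_pos.2 ha₁)
  have r2 := mul_pos hv (sub_pos.2 ha₂)
  rcases le_total a₁ a₂ with ha | ha <;> rcases le_total b₁ b₂ with hb | hb <;>
    simp only [max_eq_left, max_eq_right, ha, hb] at h1 h2 <;> nlinarith

/-- Two rectangles that fill at least half of the vertical strip they span when stacked can be put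
into that strip, and the rest into its complement. -/
theorem packs_of_pair {s : Finset ι} {a b : ι → ℝ} {u v : ℝ} (hv : 0 < v)
    (ha : ∀ i ∈ s, 0 < a i) (hb : ∀ i ∈ s, 0 < b i)
    (ha2 : ∀ i ∈ s, 2 * a i < u) (hb2 : ∀ i ∈ s, 2 * b i < v)
    (hS : 2 * ∑ i ∈ s, a i * b i ≤ u * v) {i k : ι} (hi : i ∈ s) (hk : k ∈ s) (hik : i ≠ k)
    (hstrip : max (a i) (a k) * v ≤ 2 * (a i * b i + a k * b k))
    (ih : ∀ r ⊂ s, ∀ u' v' : ℝ, Cond r a b u' v' → Packs r a b u' v') :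
    Packs s a b u v := by
  have hsub : ({i, k} : Finset ι) ⊆ s := by
    simp [Finset.insert_subset_iff, hi, hk]
  have hsplit := Finset.sum_sdiff hsub (f := fun i => a i * b i)
  rw [Finset.sum_pair hik] at hsplit
  have hm : 2 * max (a i) (a k) < u := by
    rcases max_choice (a i) (a k) with h | h <;> rw [h]
    exacts [ha2 i hi, ha2 k hk]
  have hm0 : 0 < max (a i) (a k) := lt_max_of_lt_left (ha i hi)
  have h1 : Packs ({i, k} : Finset ι) a b (max (a i) (a k)) v :=
    packs_pair (le_max_left _ _) (le_max_right _ _) (hb i hi).le (hb k hk).le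
      (by linarith [hb2 i hi, hb2 k hk])
  have h2 : Packs (s \ {i, k}) a b (u - max (a i) (a k)) v := by
    refine ih _ (Finset.sdiff_ssubset hsub ⟨i, by simp⟩) _ _ (cond_of_low hv.le
      (fun j hj => ?_) (fun j hj => (hb2 j (Finset.mem_sdiff.1 hj).1).le) ?_)
    · linarith [ha2 j (Finset.mem_sdiff.1 hj).1]
    · rw [sub_mul]
      linarith
  exact h1.beside h2 (by rw [Finset.union_sdiff_of_subset hsub]) (by ring) hm0.le
    (by linarith)

/-! ### The induction -/

/-- Steinberg's theorem for rectangles with positive sides. -/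
theorem packs_of_cond (s : Finset ι) : ∀ (a b : ι → ℝ) (u v : ℝ),
    (∀ i ∈ s, 0 < a i) → (∀ i ∈ s, 0 < b i) → Cond s a b u v → Packs s a b u v := by
  induction s using Finset.strongInduction with
  | H s IH =>
  intro a b u v ha hb hc
  have ih : ∀ r ⊂ s, ∀ u' v' : ℝ, Cond r a b u' v' → Packs r a b u' v' := fun r hr u' v' h =>
    IH r hr a b u' v' (fun i hi => ha i (hr.1 hi)) (fun i hi => hb i (hr.1 hi)) h
  have ih' : ∀ r ⊂ s, ∀ u' v' : ℝ, Cond r b a u' v' → Packs r b a u' v' := fun r hr u' v' h =>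
    (ih r hr v' u' h.swap).swap
  by_cases hwide : ∃ i ∈ s, u ≤ 2 * a i
  · exact packs_of_wide ha hb hc hwide ih
  by_cases hhigh : ∃ i ∈ s, v ≤ 2 * b i
  · exact (packs_of_wide hb ha hc.swap hhigh ih').swap
  push Not at hwide hhigh
  have hS : 2 * ∑ i ∈ s, a i * b i ≤ u * v := by
    obtain ⟨A, B, -, -, -, -, h⟩ := hc
    linarith [mul_nonneg (le_max_right (2 * A - u) 0) (le_max_right (2 * B - v) 0)]
  have hS' : 2 * ∑ i ∈ s, b i * a i ≤ v * u := by
    simpa only [mul_comm] using hS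
  rcases s.eq_empty_or_nonempty with rfl | ⟨i₀, hi₀⟩
  · exact ⟨fun _ => 0, fun _ => 0, by simp, by simp⟩
  have hu : 0 < u := by linarith [ha i₀ hi₀, hwide i₀ hi₀]
  have hv : 0 < v := by linarith [hb i₀ hi₀, hhigh i₀ hi₀]
  have huv : 0 < u * v := mul_pos hu hv
  rcases (Finset.one_le_card.2 ⟨i₀, hi₀⟩).eq_or_lt with h1 | hs
  · obtain ⟨i, rfl⟩ := Finset.card_eq_one.1 h1.symm
    have hi := Finset.mem_singleton_self i
    exact packs_singleton i (by linarith [ha i hi, hwide i hi]) (by linarith [hb i hi, hhigh i hi])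
  have hpos : ∀ i ∈ s, 0 < a i * b i := fun i hi => mul_pos (ha i hi) (hb i hi)
  by_cases hpair : ∃ i ∈ s, ∃ k ∈ s, i ≠ k ∧
      (u < 4 * a i ∧ v < 4 * b i) ∧ (u < 4 * a k ∧ v < 4 * b k)
  · obtain ⟨i, hi, k, hk, hik, ⟨p1, p2⟩, p3, p4⟩ := hpair
    rcases pair_strip hu hv p1 p3 p2 p4 with h | h
    · exact packs_of_pair hv ha hb hwide hhigh hS hi hk hik h ih
    · refine (packs_of_pair hu hb ha hhigh hwide hS' hi hk hik ?_ ih').swap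
      rw [mul_comm (b i), mul_comm (b k)]
      exact h
  by_cases hW : (∃ i ∈ s, 4 * a i ≤ u) ∧
      8 * ∑ i ∈ s.filter (fun i => u < 4 * a i), a i * b i ≤ 3 * (u * v)
  · exact packs_of_few_wide hu hv ha hb hwide hhigh hS hW.1 hW.2 hs ih
  by_cases hH : (∃ i ∈ s, 4 * b i ≤ v) ∧
      8 * ∑ i ∈ s.filter (fun i => v < 4 * b i), a i * b i ≤ 3 * (u * v)
  · refine (packs_of_few_wide hv hu hb ha hhigh hwide hS' hH.1 ?_ hs ih').swap
    simpa only [mul_comm (b _), mul_comm v u] using hH.2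
  -- At most one rectangle is both wide and high, which leaves no room for the total area.
  exfalso
  set W := s.filter (fun i => u < 4 * a i) with hWdef
  set H := s.filter (fun i => v < 4 * b i) with hHdef
  have hcard : (W ∩ H).card ≤ 1 := by
    rw [Finset.card_le_one]
    intro i hi k hk
    by_contra hik
    simp only [hWdef, hHdef, Finset.mem_inter, Finset.mem_filter] at hi hk
    exact hpair ⟨i, hi.1.1, k, hk.1.1, hik, ⟨hi.1.2, hi.2.2⟩, hk.1.2, hk.2.2⟩
  have hsmall : 4 * ∑ i ∈ W ∩ H, a i * b i ≤ u * v := by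
    rcases Nat.le_one_iff_eq_zero_or_eq_one.1 hcard with h | h
    · rw [Finset.card_eq_zero.1 h, Finset.sum_empty]
      linarith
    · obtain ⟨i, hi⟩ := Finset.card_eq_one.1 h
      have his : i ∈ s := by
        have : i ∈ W ∩ H := hi ▸ Finset.mem_singleton_self i
        exact (Finset.mem_filter.1 (Finset.mem_inter.1 this).1).1
      rw [hi, Finset.sum_singleton]
      nlinarith [ha i his, hb i his, hwide i his, hhigh i his]
  have hWbig : W = s ∨ 3 * (u * v) < 8 * ∑ i ∈ W, a i * b i := by
    by_cases h : ∃ i ∈ s, 4 * a i ≤ u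
    · exact Or.inr (not_le.1 fun h' => hW ⟨h, h'⟩)
    · push Not at h
      exact Or.inl (Finset.filter_true_of_mem h)
  have hHbig : H = s ∨ 3 * (u * v) < 8 * ∑ i ∈ H, a i * b i := by
    by_cases h : ∃ i ∈ s, 4 * b i ≤ v
    · exact Or.inr (not_le.1 fun h' => hH ⟨h, h'⟩)
    · push Not at h
      exact Or.inl (Finset.filter_true_of_mem h)
  have hWs : W ⊆ s := Finset.filter_subset _ _
  have hHs : H ⊆ s := Finset.filter_subset _ _
  rcases hWbig with h | h <;> rcases hHbig with h' | h'
  · rw [h, h', Finset.inter_self] at hcard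
    omega
  · rw [h, Finset.inter_eq_right.2 hHs] at hsmall
    linarith
  · rw [h', Finset.inter_eq_left.2 hWs] at hsmall
    linarith
  · have h1 := Finset.sum_union_inter (s₁ := W) (s₂ := H) (f := fun i => a i * b i)
    have h2 : ∑ i ∈ W ∪ H, a i * b i ≤ ∑ i ∈ s, a i * b i :=
      Finset.sum_le_sum_of_subset_of_nonneg (Finset.union_subset hWs hHs)
        fun i hi _ => (hpos i hi).le
    linarith

end Steinberg

/-- Steinberg's theorem: a set of rectangles with widths at most `wM ≤ w` and heights
at most `hM ≤ h` can be packed (axis-aligned, without rotation, non-overlapping) into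
the box `[0,w] × [0,h]` provided
`2·a(I') ≤ w·h − (2·wM − w)₊ · (2·hM − h)₊`.
In particular, if every rectangle has height at most `h/2` and total area at most
`w·h/2`, the set packs into the box. -/
theorem steinberg_packing (n : ℕ) (w h wM hM : ℝ) (hw : 0 < w) (hh : 0 < h)
    (wi hi : Fin n → ℝ) (hwi : ∀ i, 0 ≤ wi i) (hhi : ∀ i, 0 ≤ hi i)
    (hwM : ∀ i, wi i ≤ wM) (hhM : ∀ i, hi i ≤ hM)
    (hwMw : wM ≤ w) (hhMh : hM ≤ h)
    (hcond : 2 * ∑ i, wi i * hi i ≤ w * h - max (2 * wM - w) 0 * max (2 * hM - h) 0) :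
    ∃ x y : Fin n → ℝ,
      (∀ i, 0 ≤ x i ∧ x i + wi i ≤ w ∧ 0 ≤ y i ∧ y i + hi i ≤ h) ∧
      (∀ i j, i ≠ j →
        x i + wi i ≤ x j ∨ x j + wi j ≤ x i ∨ y i + hi i ≤ y j ∨ y j + hi j ≤ y i) := by
  set s : Finset (Fin n) := Finset.univ.filter (fun i => 0 < wi i ∧ 0 < hi i) with hs
  have hmem : ∀ i, i ∉ s → wi i = 0 ∨ hi i = 0 := by
    intro i his
    simp only [hs, Finset.mem_filter, Finset.mem_univ, true_and, not_and_or, not_lt] at his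
    exact his.imp (fun h => le_antisymm h (hwi i)) (fun h => le_antisymm h (hhi i))
  have hsum : ∑ i ∈ s, wi i * hi i ≤ ∑ i, wi i * hi i :=
    Finset.sum_le_sum_of_subset_of_nonneg (Finset.subset_univ _)
      fun i _ _ => mul_nonneg (hwi i) (hhi i)
  obtain ⟨x, y, h1, h2⟩ := Steinberg.packs_of_cond s wi hi w h
    (fun i his => (Finset.mem_filter.1 his).2.1) (fun i his => (Finset.mem_filter.1 his).2.2)
    ⟨wM, hM, fun i _ => hwM i, fun i _ => hhM i, hwMw, hhMh, by linarith⟩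
  have hpos : ∀ i, 0 ≤ (if i ∈ s then x i else 0) ∧ 0 ≤ (if i ∈ s then y i else 0) := by
    intro i
    by_cases his : i ∈ s
    · simpa only [his, if_true] using ⟨(h1 i his).1, (h1 i his).2.2.1⟩
    · simp [his]
  refine ⟨fun i => if i ∈ s then x i else 0, fun i => if i ∈ s then y i else 0,
    fun i => ?_, fun i j hij => ?_⟩
  · by_cases his : i ∈ s
    · simpa only [his, if_true] using h1 i his
    · simp only [his, if_false]
      exact ⟨le_rfl, by linarith [hwM i], le_rfl, by linarith [hhM i]⟩
  · by_cases his : i ∈ s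
    · by_cases hjs : j ∈ s
      · simpa only [his, hjs, if_true] using h2 i his j hjs hij
      · have := hpos i
        rcases hmem j hjs with h0 | h0
        · right; left
          simpa [hjs, h0] using this.1
        · right; right; right
          simpa [hjs, h0] using this.2
    · have := hpos j
      rcases hmem i his with h0 | h0
      · left
        simpa [his, h0] using this.1
      · right; right; left
        simpa [his, h0] using this.2
end
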